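/- Let K be a field and let B₁,…,B_k ∈ K^{m×n} be a linearly independent family of matrices generating a column-nondegenerate matrix rank-metric code C = span_K{B₁,…,B_k}, with associated column-system S. Let t ∈ {1,…,k} and s ∈ {1,…,n}. Then d_t^r(C) ≥ s if and only if every subspace W ⊆ K^k with dim_K W = k − t satisfies dim_K S_c(W) ≤ n − s. -/

import Mathlib

open Matrix

section Defs

variable {K : Type*} [Field K]

/-- The row space of a matrix: the span of its rows in `K^b`. -/
noncomputable def rowSpace {a b : ℕ} (M : Matrix (Fin a) (Fin b) K) :
    Submodule K (Fin b → K) :=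
  Submodule.span K (Set.range fun i => M i)

/-- The column space of a matrix: the span of its columns in `K^a`. -/
noncomputable def colSpace {a b : ℕ} (M : Matrix (Fin a) (Fin b) K) :
    Submodule K (Fin a → K) :=
  Submodule.span K (Set.range fun j i => M i j)

/-- `Sc S U = {X ∈ S : colsp(X) ⊆ U}`, a subspace of the matrix space. -/
noncomputable def Sc {a b : ℕ} (S : Submodule K (Matrix (Fin a) (Fin b) K))
    (U : Submodule K (Fin a → K)) : Submodule K (Matrix (Fin a) (Fin b) K) where
  carrier := {X | X ∈ S ∧ colSpace X ≤ U}
  add_mem' := by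
    rintro X Y ⟨hXS, hXU⟩ ⟨hYS, hYU⟩
    refine ⟨S.add_mem hXS hYS, ?_⟩
    rw [colSpace, Submodule.span_le]
    rintro v ⟨j, rfl⟩
    have hx : (fun i => X i j) ∈ U := hXU (Submodule.subset_span ⟨j, rfl⟩)
    have hy : (fun i => Y i j) ∈ U := hYU (Submodule.subset_span ⟨j, rfl⟩)
    exact U.add_mem hx hy
  zero_mem' := by
    refine ⟨S.zero_mem, ?_⟩
    rw [colSpace, Submodule.span_le]
    rintro v ⟨j, rfl⟩
    exact U.zero_mem
  smul_mem' := by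
    rintro c X ⟨hXS, hXU⟩
    refine ⟨S.smul_mem c hXS, ?_⟩
    rw [colSpace, Submodule.span_le]
    rintro v ⟨j, rfl⟩
    exact U.smul_mem c (hXU (Submodule.subset_span ⟨j, rfl⟩))

/-- `Sr S U = {X ∈ S : rowsp(X) ⊆ U}`, a subspace of the matrix space. -/
noncomputable def Sr {a b : ℕ} (S : Submodule K (Matrix (Fin a) (Fin b) K))
    (U : Submodule K (Fin b → K)) : Submodule K (Matrix (Fin a) (Fin b) K) where
  carrier := {X | X ∈ S ∧ rowSpace X ≤ U}
  add_mem' := by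
    rintro X Y ⟨hXS, hXU⟩ ⟨hYS, hYU⟩
    refine ⟨S.add_mem hXS hYS, ?_⟩
    rw [rowSpace, Submodule.span_le]
    rintro v ⟨i, rfl⟩
    have hx : X i ∈ U := hXU (Submodule.subset_span ⟨i, rfl⟩)
    have hy : Y i ∈ U := hYU (Submodule.subset_span ⟨i, rfl⟩)
    exact U.add_mem hx hy
  zero_mem' := by
    refine ⟨S.zero_mem, ?_⟩
    rw [rowSpace, Submodule.span_le]
    rintro v ⟨i, rfl⟩
    exact U.zero_mem
  smul_mem' := by
    rintro c X ⟨hXS, hXU⟩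
    refine ⟨S.smul_mem c hXS, ?_⟩
    rw [rowSpace, Submodule.span_le]
    rintro v ⟨i, rfl⟩
    exact U.smul_mem c (hXU (Submodule.subset_span ⟨i, rfl⟩))

/-- Row support of a set of matrices: the sum of the row spaces of its elements. -/
noncomputable def rowSupport {a b : ℕ} (D : Submodule K (Matrix (Fin a) (Fin b) K)) :
    Submodule K (Fin b → K) :=
  ⨆ M ∈ D, rowSpace M

/-- Column support of a set of matrices: the sum of the column spaces of its elements. -/
noncomputable def colSupport {a b : ℕ} (D : Submodule K (Matrix (Fin a) (Fin b) K)) :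
    Submodule K (Fin a → K) :=
  ⨆ M ∈ D, colSpace M

/-- The hyperplane `u^⊥ = {v : ∑ i, u i * v i = 0}`. -/
noncomputable def perp {a : ℕ} (u : Fin a → K) : Submodule K (Fin a → K) where
  carrier := {v | ∑ i, u i * v i = 0}
  add_mem' := by
    intro v w hv hw
    simp only [Set.mem_setOf_eq, Pi.add_apply, mul_add, Finset.sum_add_distrib] at *
    simp [hv, hw]
  zero_mem' := by simp
  smul_mem' := by
    intro c v hv
    simp only [Set.mem_setOf_eq, Pi.smul_apply, smul_eq_mul] at *
    have : ∑ i, u i * (c * v i) = c * ∑ i, u i * v i := by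
      rw [Finset.mul_sum]; congr 1; ext i; ring
    simp [this, hv]

/-- The orthogonal complement `U^⊥ = {v : ∀ u ∈ U, ∑ i, u i * v i = 0}`. -/
noncomputable def perpSub {a : ℕ} (U : Submodule K (Fin a → K)) : Submodule K (Fin a → K) :=
  ⨅ u ∈ U, perp u

/-- The slices of the column-system: `(X l) i j = (B i) j l`. -/
def colSlices {m n k : ℕ} (B : Fin k → Matrix (Fin m) (Fin n) K) :
    Fin n → Matrix (Fin k) (Fin m) K :=
  fun l => Matrix.of fun i j => B i j l

/-- The slices of the row-system: `(Y j) l i = (B i) j l`. -/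
def rowSlices {m n k : ℕ} (B : Fin k → Matrix (Fin m) (Fin n) K) :
    Fin m → Matrix (Fin n) (Fin k) K :=
  fun j => Matrix.of fun l i => B i j l

/-- The linear map `u ↦ ∑ i, u i • B i` (i.e. `u ↦ m₁(T,u)`). -/
noncomputable def combMap {m n k : ℕ} (B : Fin k → Matrix (Fin m) (Fin n) K) :
    (Fin k → K) →ₗ[K] Matrix (Fin m) (Fin n) K where
  toFun u := ∑ i, u i • B i
  map_add' := by intro u v; simp [add_smul, Finset.sum_add_distrib]
  map_smul' := by intro c u; simp [smul_smul, Finset.smul_sum]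

/-- The `t`-th row-generalized rank weight. -/
noncomputable def dRow {a b : ℕ} (C : Submodule K (Matrix (Fin a) (Fin b) K)) (t : ℕ) : ℕ :=
  sInf {r | ∃ D : Submodule K (Matrix (Fin a) (Fin b) K),
    D ≤ C ∧ Module.finrank K D = t ∧ Module.finrank K (rowSupport D) = r}

/-- The `t`-th column-generalized rank weight. -/
noncomputable def dCol {a b : ℕ} (C : Submodule K (Matrix (Fin a) (Fin b) K)) (t : ℕ) : ℕ :=
  sInf {r | ∃ D : Submodule K (Matrix (Fin a) (Fin b) K),
    D ≤ C ∧ Module.finrank K D = t ∧ Module.finrank K (colSupport D) = r}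

end Defs

section Duality

variable {K : Type*} [Field K] {a m n k : ℕ}

theorem mem_perpSub {U : Submodule K (Fin a → K)} {v : Fin a → K} :
    v ∈ perpSub U ↔ ∀ u ∈ U, u ⬝ᵥ v = 0 := by
  simp only [perpSub, Submodule.mem_iInf]
  rfl

theorem perpSub_eq_orthogonal (U : Submodule K (Fin a → K)) :
    perpSub U = LinearMap.BilinForm.orthogonal (dotProductBilin K K) U := by
  ext v
  rw [mem_perpSub]
  rfl

theorem nondegenerate_dotProductBilin :
    (dotProductBilin K K : LinearMap.BilinForm K (Fin a → K)).Nondegenerate :=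
  ⟨fun v hv => dotProduct_eq_zero v hv,
    fun v hv => dotProduct_eq_zero v fun w => by rw [dotProduct_comm]; exact hv w⟩

theorem isRefl_dotProductBilin :
    LinearMap.BilinForm.IsRefl (dotProductBilin K K : LinearMap.BilinForm K (Fin a → K)) :=
  fun v w h => (dotProduct_comm w v).trans h

theorem finrank_perpSub (U : Submodule K (Fin a → K)) :
    Module.finrank K (perpSub U) = a - Module.finrank K U := by
  rw [perpSub_eq_orthogonal,
    LinearMap.BilinForm.finrank_orthogonal nondegenerate_dotProductBilin, Module.finrank_fin_fun]

theorem perpSub_perpSub (U : Submodule K (Fin a → K)) : perpSub (perpSub U) = U := by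
  rw [perpSub_eq_orthogonal, perpSub_eq_orthogonal,
    LinearMap.BilinForm.orthogonal_orthogonal nondegenerate_dotProductBilin isRefl_dotProductBilin]

theorem rowSpace_le_iff {M : Matrix (Fin m) (Fin n) K} {U : Submodule K (Fin n → K)} :
    rowSpace M ≤ U ↔ ∀ i, M i ∈ U := by
  rw [rowSpace, Submodule.span_le, Set.range_subset_iff]
  rfl

theorem colSpace_le_iff {M : Matrix (Fin m) (Fin n) K} {U : Submodule K (Fin m → K)} :
    colSpace M ≤ U ↔ ∀ j, (fun i => M i j) ∈ U := by
  rw [colSpace, Submodule.span_le, Set.range_subset_iff]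
  rfl

theorem rowSupport_le_iff {D : Submodule K (Matrix (Fin m) (Fin n) K)}
    {U : Submodule K (Fin n → K)} : rowSupport D ≤ U ↔ ∀ M ∈ D, ∀ i, M i ∈ U := by
  simp only [rowSupport, iSup_le_iff, rowSpace_le_iff]

/-- The orthogonal complement of the row support is the common right kernel. -/
theorem mem_perpSub_rowSupport {D : Submodule K (Matrix (Fin m) (Fin n) K)} {v : Fin n → K} :
    v ∈ perpSub (rowSupport D) ↔ ∀ M ∈ D, M *ᵥ v = 0 := by
  have hle : v ∈ perpSub (rowSupport D) ↔ rowSupport D ≤ perp v := by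
    rw [mem_perpSub]
    refine forall₂_congr fun u _ => ?_
    rw [dotProduct_comm]
    rfl
  rw [hle, rowSupport_le_iff]
  simp only [funext_iff]
  refine forall₃_congr fun M _ i => ?_
  change v ⬝ᵥ M i = 0 ↔ M i ⬝ᵥ v = 0
  rw [dotProduct_comm]

theorem dotProduct_linearCombination_colSlices (B : Fin k → Matrix (Fin m) (Fin n) K)
    (u : Fin k → K) (v : Fin n → K) (j : Fin m) :
    (u ⬝ᵥ fun i => Fintype.linearCombination K (colSlices B) v i j) = (combMap B u *ᵥ v) j := by
  simp only [dotProduct, mulVec, combMap, colSlices, Fintype.linearCombination_apply,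
    LinearMap.coe_mk, AddHom.coe_mk, Matrix.sum_apply, Matrix.smul_apply, Matrix.of_apply,
    smul_eq_mul, Finset.mul_sum, Finset.sum_mul]
  rw [Finset.sum_comm]
  exact Finset.sum_congr rfl fun _ _ => Finset.sum_congr rfl fun _ _ => by ring

theorem colSpace_linearCombination_le_perpSub_iff (B : Fin k → Matrix (Fin m) (Fin n) K)
    (U : Submodule K (Fin k → K)) (v : Fin n → K) :
    colSpace (Fintype.linearCombination K (colSlices B) v) ≤ perpSub U ↔
      v ∈ perpSub (rowSupport (U.map (combMap B))) := by
  rw [colSpace_le_iff, mem_perpSub_rowSupport]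
  simp only [mem_perpSub, dotProduct_linearCombination_colSlices, Submodule.mem_map,
    forall_exists_index, and_imp, forall_apply_eq_imp_iff₂, funext_iff, Pi.zero_apply]
  exact ⟨fun h u hu j => h j u hu, fun h j u hu => h u hu j⟩

theorem combMap_eq_linearCombination (B : Fin k → Matrix (Fin m) (Fin n) K) :
    combMap B = Fintype.linearCombination K B :=
  rfl

theorem range_combMap (B : Fin k → Matrix (Fin m) (Fin n) K) :
    LinearMap.range (combMap B) = Submodule.span K (Set.range B) := by
  rw [combMap_eq_linearCombination, Fintype.range_linearCombination]

theorem injective_linearCombination_colSlices {B : Fin k → Matrix (Fin m) (Fin n) K}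
    (hB : rowSupport (Submodule.span K (Set.range B)) = ⊤) :
    Function.Injective (Fintype.linearCombination K (colSlices B)) := by
  rw [injective_iff_map_eq_zero]
  intro v hv
  have h := (colSpace_linearCombination_le_perpSub_iff B ⊤ v).1
    (colSpace_le_iff.2 fun j => by rw [hv]; exact zero_mem _)
  rw [Submodule.map_top, range_combMap, hB, mem_perpSub] at h
  exact dotProduct_eq_zero v fun w => by rw [dotProduct_comm]; exact h w trivial

theorem Sc_perpSub_eq_map (B : Fin k → Matrix (Fin m) (Fin n) K) (U : Submodule K (Fin k → K)) :
    Sc (Submodule.span K (Set.range (colSlices B))) (perpSub U) =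
      (perpSub (rowSupport (U.map (combMap B)))).map
        (Fintype.linearCombination K (colSlices B)) := by
  ext X
  rw [← Fintype.range_linearCombination]
  constructor
  · rintro ⟨⟨v, rfl⟩, hv⟩
    exact ⟨v, (colSpace_linearCombination_le_perpSub_iff B U v).1 hv, rfl⟩
  · rintro ⟨v, hv, rfl⟩
    exact ⟨⟨v, rfl⟩, (colSpace_linearCombination_le_perpSub_iff B U v).2 hv⟩

theorem finrank_Sc_perpSub {B : Fin k → Matrix (Fin m) (Fin n) K}
    (hB : rowSupport (Submodule.span K (Set.range B)) = ⊤) (U : Submodule K (Fin k → K)) :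
    Module.finrank K (Sc (Submodule.span K (Set.range (colSlices B))) (perpSub U)) =
      n - Module.finrank K (rowSupport (U.map (combMap B))) := by
  rw [Sc_perpSub_eq_map, ← finrank_perpSub]
  exact (Submodule.equivMapOfInjective _ (injective_linearCombination_colSlices hB)
    _).finrank_eq.symm

theorem exists_subspace_finrank_eq {t : ℕ} (ht : t ≤ k) :
    ∃ U : Submodule K (Fin k → K), Module.finrank K U = t := by
  obtain ⟨f, hf⟩ := exists_linearIndependent_of_le_finrank (R := K) (M := Fin k → K)
    (n := t) (by rwa [Module.finrank_fin_fun])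
  exact ⟨Submodule.span K (Set.range f), by rw [finrank_span_eq_card hf, Fintype.card_fin]⟩

/-- Bounds on the generalized weights of a code, in terms of subspaces of its coordinate space. -/
theorem le_dRow_span_iff {B : Fin k → Matrix (Fin m) (Fin n) K} (hB : LinearIndependent K B)
    {t s : ℕ} (ht : t ≤ k) :
    s ≤ dRow (Submodule.span K (Set.range B)) t ↔
      ∀ U : Submodule K (Fin k → K), Module.finrank K U = t →
        s ≤ Module.finrank K (rowSupport (U.map (combMap B))) := by
  have hinj : Function.Injective (combMap B) := hB.fintypeLinearCombination_injective
  have hrank (U : Submodule K (Fin k → K)) :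
      Module.finrank K (U.map (combMap B)) = Module.finrank K U :=
    (Submodule.equivMapOfInjective _ hinj U).finrank_eq.symm
  have hle (U : Submodule K (Fin k → K)) :
      U.map (combMap B) ≤ Submodule.span K (Set.range B) := by
    rw [← range_combMap]
    exact LinearMap.map_le_range
  constructor
  · intro h U hU
    exact h.trans (Nat.sInf_le ⟨_, hle U, (hrank U).trans hU, rfl⟩)
  · intro h
    obtain ⟨U₀, hU₀⟩ := exists_subspace_finrank_eq (K := K) ht
    refine le_csInf ⟨_, _, hle U₀, (hrank U₀).trans hU₀, rfl⟩ ?_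
    rintro _ ⟨D, hD, hDt, rfl⟩
    rw [← range_combMap] at hD
    rw [← Submodule.map_comap_eq_self hD] at hDt ⊢
    exact h _ ((hrank _).symm.trans hDt)

end Duality

/-- For a column-nondegenerate code `C` with associated column-system `S`,
`d_t^r(C) ≥ s` iff every subspace `W ⊆ K^k` of dimension `k − t` satisfies
`dim S_c(W) ≤ n − s`. -/
theorem stmt6 {K : Type*} [Field K] {m n k : ℕ}
    (hm : 0 < m) (hn : 0 < n) (hk : 0 < k)
    (B : Fin k → Matrix (Fin m) (Fin n) K) (hB : LinearIndependent K B)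
    (C : Submodule K (Matrix (Fin m) (Fin n) K))
    (hC : C = Submodule.span K (Set.range B))
    (hnd : rowSupport C = ⊤)
    (S : Submodule K (Matrix (Fin k) (Fin m) K))
    (hS : S = Submodule.span K (Set.range (colSlices B)))
    (t s : ℕ) (ht1 : 1 ≤ t) (htk : t ≤ k) (hs1 : 1 ≤ s) (hsn : s ≤ n) :
    s ≤ dRow C t ↔
      ∀ W : Submodule K (Fin k → K), Module.finrank K W = k - t →
        Module.finrank K (Sc S W) ≤ n - s := by
  subst hC hS
  rw [le_dRow_span_iff hB htk]
  constructor
  · intro h W hW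
    have hU := h (perpSub W) (by rw [finrank_perpSub, hW]; omega)
    rw [← perpSub_perpSub W, finrank_Sc_perpSub hnd]
    omega
  · intro h U hU
    have hW := h (perpSub U) (by rw [finrank_perpSub, hU])
    rw [finrank_Sc_perpSub hnd] at hW
    omega
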